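/- Let β > 0 and let m ≥ 1 be an integer. There exists K > 0 depending only on m and β such that for all integers n ≥ 1, |E[Σ_{i=1}^{n} binom(d(u_i), 2)] − ((2+5β)/(2β)·m² + (2−β)/(2β)·m)·n| ≤ K · n^{2/(2+β)}, where the expectation is over G^n_{m,β}. -/

import Mathlib

open Finset

/-- A parent sequence of length `N`: for each `t ∈ {2,…,N}` an index `f t ∈ {1,…,t-1}`. -/
def ParentSeq (N : ℕ) : Type :=
  ∀ t : Set.Icc 2 N, Set.Icc 1 ((t : ℕ) - 1)

noncomputable instance (N : ℕ) : Fintype (ParentSeq N) := by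
  unfold ParentSeq
  classical
  infer_instance

/-- The value of a parent sequence at `j` (junk value `0` outside `{2,…,N}`). -/
def pval {N : ℕ} (f : ParentSeq N) (j : ℕ) : ℕ :=
  if h : 2 ≤ j ∧ j ≤ N then (f ⟨j, Set.mem_Icc.mpr h⟩ : ℕ) else 0

/-- The degree `d_t(v_i)` of vertex `i` at time `t` in the tree determined by `f`. -/
def deg {N : ℕ} (f : ParentSeq N) (t i : ℕ) : ℕ :=
  ((Finset.Icc 2 t).filter (fun j => pval f j = i)).card + (if 2 ≤ i then 1 else 0)

/-- The Móri probability of the parent sequence `f`. -/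
noncomputable def moriP {N : ℕ} (β : ℝ) (f : ParentSeq N) : ℝ :=
  ∏ t ∈ Finset.Icc 2 N, ((deg f (t - 1) (pval f t) : ℝ) + β) / ((2 + β) * ((t : ℝ) - 1) - 2)

/-- Expectation of `X` under the Móri measure on parent sequences of length `N`. -/
noncomputable def moriE (N : ℕ) (β : ℝ) (X : ParentSeq N → ℝ) : ℝ :=
  ∑ f : ParentSeq N, moriP β f * X f

open Classical in
/-- Probability of an event under the Móri measure on parent sequences of length `N`. -/
noncomputable def moriPr (N : ℕ) (β : ℝ) (p : ParentSeq N → Prop) : ℝ :=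
  ∑ f : ParentSeq N, if p f then moriP β f else 0

/-- The index of the merged vertex containing tree vertex `t` when merging in blocks of `m`. -/
def blk (m t : ℕ) : ℕ := (t - 1) / m + 1

/-- The number `m(a,b)` of edges joining `u_a` and `u_b` in the Móri graph `G^n_{m,β}`. -/
def mult (n m : ℕ) (f : ParentSeq (n * m)) (a b : ℕ) : ℕ :=
  ((Finset.Icc 2 (n * m)).filter (fun t =>
    (blk m t = a ∧ blk m (pval f t) = b) ∨ (blk m t = b ∧ blk m (pval f t) = a))).card

/-- The degree `d(u_i)` of the merged vertex `u_i` in the Móri graph `G^n_{m,β}`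
(a loop contributes `2`). -/
def degU (n m : ℕ) (f : ParentSeq (n * m)) (i : ℕ) : ℕ :=
  ((Finset.Icc 2 (n * m)).filter (fun t => blk m t = i)).card +
  ((Finset.Icc 2 (n * m)).filter (fun t => blk m (pval f t) = i)).card


def pext {N : ℕ} (f : ParentSeq N) (i : ℕ) : ParentSeq (N + 1) := fun t =>
  if h : (t : ℕ) ≤ N then ⟨(f ⟨t, ⟨t.2.1, h⟩⟩ : ℕ), (f ⟨t, ⟨t.2.1, h⟩⟩).2⟩
  else if h' : 1 ≤ i ∧ i ≤ (t : ℕ) - 1 then ⟨i, h'⟩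
  else ⟨1, ⟨le_refl 1, by have := t.2.1; omega⟩⟩

def prestr {N : ℕ} (g : ParentSeq (N + 1)) : ParentSeq N := fun t =>
  g ⟨t, ⟨t.2.1, le_trans t.2.2 (Nat.le_succ N)⟩⟩

lemma pval_mem {N : ℕ} (f : ParentSeq N) {j : ℕ} (h : j ∈ Icc 2 N) :
    1 ≤ pval f j ∧ pval f j ≤ j - 1 := by
  rw [Finset.mem_Icc] at h
  unfold pval
  rw [dif_pos h]
  exact (f ⟨j, _⟩).2

lemma pval_ext_eq {N : ℕ} {f g : ParentSeq N} (h : ∀ j ∈ Icc 2 N, pval f j = pval g j) : f = g := by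
  funext t
  apply Subtype.ext
  have := h t (Finset.mem_Icc.mpr t.2)
  unfold pval at this
  have ht : 2 ≤ (t : ℕ) ∧ (t : ℕ) ≤ N := t.2
  rw [dif_pos ht, dif_pos ht] at this
  exact this

lemma pval_pext {N : ℕ} (f : ParentSeq N) {i : ℕ} (hi : i ∈ Icc 1 N) (j : ℕ) :
    pval (pext f i) j = if j = N + 1 then i else pval f j := by
  rw [Finset.mem_Icc] at hi
  unfold pval
  by_cases hj : j = N + 1
  · subst hj
    rw [if_pos rfl, dif_pos (by omega)]
    unfold pext
    rw [dif_neg (by simp), dif_pos (by simpa using hi)]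
  · rw [if_neg hj]
    by_cases h : 2 ≤ j ∧ j ≤ N
    · rw [dif_pos h, dif_pos (by omega)]
      unfold pext
      rw [dif_pos h.2]
    · rw [dif_neg h, dif_neg (by omega)]

lemma pval_prestr {N : ℕ} (g : ParentSeq (N + 1)) {j : ℕ} (hj : j ∈ Icc 2 N) :
    pval (prestr g) j = pval g j := by
  rw [Finset.mem_Icc] at hj
  unfold pval
  rw [dif_pos hj, dif_pos (by omega)]
  rfl

lemma sum_pext {N : ℕ} (hN : 1 ≤ N) (F : ParentSeq (N + 1) → ℝ) :
    ∑ g, F g = ∑ f : ParentSeq N, ∑ i ∈ Icc 1 N, F (pext f i) := by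
  rw [← Finset.sum_product']
  symm
  have key : ∀ g : ParentSeq (N + 1), pval g (N + 1) ∈ Icc 1 N := by
    intro g
    have := pval_mem g (j := N + 1) (by simp; omega)
    simpa using this
  refine Finset.sum_nbij' (fun p => pext p.1 p.2) (fun g => (prestr g, pval g (N + 1)))
    ?_ ?_ ?_ ?_ ?_
  · intros; exact Finset.mem_univ _
  · intro g _
    exact Finset.mem_product.mpr ⟨Finset.mem_univ _, key g⟩
  · rintro ⟨f, i⟩ hp
    have hi := (Finset.mem_product.mp hp).2
    refine Prod.ext ?_ ?_
    · apply pval_ext_eq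
      intro j hj
      simp only
      rw [pval_prestr _ hj, pval_pext f hi, if_neg]
      rw [Finset.mem_Icc] at hj; omega
    · simp only
      rw [pval_pext f hi, if_pos rfl]
  · intro g _
    apply pval_ext_eq
    intro j hj
    simp only
    rw [pval_pext _ (key g)]
    split_ifs with h
    · rw [h]
    · apply pval_prestr
      rw [Finset.mem_Icc] at hj ⊢; omega
  · intros; rfl

lemma deg_pext {N : ℕ} (f : ParentSeq N) {i : ℕ} (hi : i ∈ Icc 1 N) {t : ℕ} (ht : t ≤ N) (k : ℕ) :
    deg (pext f i) t k = deg f t k := by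
  unfold deg
  congr 2
  apply Finset.filter_congr
  intro j hj
  rw [Finset.mem_Icc] at hj
  rw [pval_pext f hi, if_neg (by omega)]

lemma moriP_pext {N : ℕ} (hN : 1 ≤ N) (β : ℝ) (f : ParentSeq N) {i : ℕ} (hi : i ∈ Icc 1 N) :
    moriP β (pext f i) = moriP β f * (((deg f N i : ℝ) + β) / ((2 + β) * N - 2)) := by
  unfold moriP
  rw [Finset.prod_Icc_succ_top (by omega)]
  congr 1
  · apply Finset.prod_congr rfl
    intro t ht
    rw [Finset.mem_Icc] at ht
    rw [deg_pext f hi (by omega), pval_pext f hi, if_neg (by omega)]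
  · rw [deg_pext f hi (by omega), pval_pext f hi, if_pos rfl]
    simp

lemma moriE_succ {N : ℕ} (hN : 1 ≤ N) (β : ℝ) (X : ParentSeq (N + 1) → ℝ) :
    moriE (N + 1) β X = moriE N β (fun f =>
      (∑ i ∈ Icc 1 N, ((deg f N i : ℝ) + β) * X (pext f i)) / ((2 + β) * N - 2)) := by
  unfold moriE
  rw [sum_pext hN]
  apply Finset.sum_congr rfl
  intro f _
  beta_reduce
  rw [Finset.sum_div, Finset.mul_sum]
  apply Finset.sum_congr rfl
  intro i hi
  rw [moriP_pext hN β f hi]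
  ring

/-- degree sums -/
lemma sum_deg_mul {N : ℕ} (f : ParentSeq N) (h : ℕ → ℝ) :
    ∑ i ∈ Icc 1 N, (deg f N i : ℝ) * h i = ∑ j ∈ Icc 2 N, (h j + h (pval f j)) := by
  have h1 : ∀ i, (deg f N i : ℝ) * h i =
      (∑ j ∈ Icc 2 N, if pval f j = i then h i else 0) + (if 2 ≤ i then h i else 0) := by
    intro i
    unfold deg
    push_cast
    rw [add_mul, Finset.card_filter]
    push_cast
    rw [Finset.sum_mul]
    simp [ite_mul]
  simp_rw [h1]
  rw [Finset.sum_add_distrib, Finset.sum_comm, Finset.sum_add_distrib, add_comm]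
  congr 1
  · rw [← Finset.sum_filter]
    apply Finset.sum_congr _ (fun _ _ => rfl)
    ext j; simp; omega
  · apply Finset.sum_congr rfl
    intro j hj
    rw [Finset.sum_ite_eq, if_pos]
    have := pval_mem f hj
    rw [Finset.mem_Icc] at hj ⊢
    omega

def DU (m : ℕ) {N : ℕ} (f : ParentSeq N) (k : ℕ) : ℝ :=
  ∑ t ∈ Icc 2 N, ((if blk m t = k then (1:ℝ) else 0) + (if blk m (pval f t) = k then 1 else 0))

lemma degU_eq (n m : ℕ) (f : ParentSeq (n * m)) (i : ℕ) : (degU n m f i : ℝ) = DU m f i := by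
  unfold degU DU
  rw [Finset.sum_add_distrib]
  push_cast [Finset.card_filter]
  rfl

lemma blk_pos (m t : ℕ) : 1 ≤ blk m t := Nat.succ_le_succ (Nat.zero_le _)

lemma blk_le (m t : ℕ) (ht : 1 ≤ t) : blk m t ≤ t := by
  unfold blk
  have := Nat.div_le_self (t - 1) m
  omega

lemma blk_mono (m : ℕ) {s t : ℕ} (h : s ≤ t) : blk m s ≤ blk m t := by
  unfold blk
  have := Nat.div_le_div_right (c := m) (show s - 1 ≤ t - 1 by omega)
  omega

lemma sum_DU_mul (m : ℕ) {N : ℕ} (f : ParentSeq N) (h : ℕ → ℝ) :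
    ∑ k ∈ Icc 1 N, DU m f k * h k = ∑ j ∈ Icc 2 N, (h (blk m j) + h (blk m (pval f j))) := by
  unfold DU
  simp_rw [Finset.sum_mul]
  rw [Finset.sum_comm]
  apply Finset.sum_congr rfl
  intro j hj
  have h1 := pval_mem f hj
  rw [Finset.mem_Icc] at hj
  simp_rw [add_mul, ite_mul, one_mul, zero_mul]
  rw [Finset.sum_add_distrib, Finset.sum_ite_eq, Finset.sum_ite_eq, if_pos, if_pos]
  · have := blk_le m _ h1.1
    rw [Finset.mem_Icc]
    exact ⟨blk_pos _ _, by omega⟩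
  · have := blk_le m j (by omega)
    rw [Finset.mem_Icc]
    exact ⟨blk_pos _ _, by omega⟩

lemma DU_pext (m : ℕ) {N : ℕ} (hN : 1 ≤ N) (f : ParentSeq N) {i : ℕ} (hi : i ∈ Icc 1 N) (k : ℕ) :
    DU m (pext f i) k = DU m f k + (if blk m (N + 1) = k then (1:ℝ) else 0)
      + (if blk m i = k then 1 else 0) := by
  unfold DU
  rw [Finset.sum_Icc_succ_top (by omega), pval_pext f hi (N + 1), if_pos rfl, add_assoc]
  congr 1
  apply Finset.sum_congr rfl
  intro t ht
  rw [Finset.mem_Icc] at ht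
  rw [pval_pext f hi, if_neg (show ¬ t = N + 1 by omega)]

lemma DU_nonneg (m : ℕ) {N : ℕ} (f : ParentSeq N) (k : ℕ) : 0 ≤ DU m f k := by
  unfold DU
  apply Finset.sum_nonneg
  intro t _
  positivity

lemma DU_zero (m : ℕ) {N : ℕ} (f : ParentSeq N) {k : ℕ} (hk : blk m N < k) : DU m f k = 0 := by
  unfold DU
  apply Finset.sum_eq_zero
  intro t ht
  have h1 := pval_mem f ht
  rw [Finset.mem_Icc] at ht
  have h2 := blk_mono m ht.2
  have h3 := blk_mono m (show pval f t ≤ N by omega)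
  rw [if_neg (by omega), if_neg (by omega), add_zero]

/-- block size -/
lemma card_blk (m : ℕ) (hm : 1 ≤ m) (N : ℕ) :
    ((Icc 1 N).filter (fun t => blk m t = blk m (N + 1))).card = N % m := by
  have : (Icc 1 N).filter (fun t => blk m t = blk m (N + 1)) = Ioc (N - N % m) N := by
    ext t
    simp only [Finset.mem_filter, Finset.mem_Icc, Finset.mem_Ioc, blk, Nat.add_sub_cancel]
    have h0 := Nat.div_add_mod N m
    have h0' := Nat.mod_lt N (show 0 < m by omega)
    constructor
    · rintro ⟨⟨h1, h2⟩, h3⟩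
      have h4 : (t - 1) / m = N / m := by omega
      have h5 := Nat.div_add_mod (t - 1) m
      rw [h4] at h5
      omega
    · rintro ⟨h1, h2⟩
      refine ⟨by omega, ?_⟩
      have : (t - 1) / m = N / m := by
        apply le_antisymm (Nat.div_le_div_right (by omega))
        rw [Nat.le_div_iff_mul_le (by omega), mul_comm]
        omega
      omega
  rw [this, Nat.card_Ioc]
  have := Nat.mod_le N m
  omega

lemma DU_last_le (m : ℕ) (hm : 1 ≤ m) {N : ℕ} (f : ParentSeq N) :
    DU m f (blk m (N + 1)) ≤ 2 * m := by
  have h1 : DU m f (blk m (N + 1)) ≤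
      ∑ t ∈ Icc 1 N, 2 * (if blk m t = blk m (N + 1) then (1:ℝ) else 0) := by
    unfold DU
    refine le_trans (Finset.sum_le_sum (g := fun t => 2 * (if blk m t = blk m (N + 1) then (1:ℝ) else 0)) ?_) ?_
    · intro t ht
      have h1 := pval_mem f ht
      rw [Finset.mem_Icc] at ht
      have h2 := blk_mono m (show pval f t ≤ t by omega)
      have h3 := blk_mono m (show t ≤ N + 1 by omega)
      split_ifs <;> first | omega | norm_num
    · apply Finset.sum_le_sum_of_subset_of_nonneg
      · exact Finset.Icc_subset_Icc (by omega) le_rfl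
      · intros; positivity
  rw [← Finset.mul_sum] at h1
  have h2 : ∑ t ∈ Icc 1 N, (if blk m t = blk m (N + 1) then (1:ℝ) else 0) = ((N % m : ℕ) : ℝ) := by
    rw [← card_blk m hm N, Finset.card_filter]; push_cast; rfl
  rw [h2] at h1
  have h3 : ((N % m : ℕ) : ℝ) ≤ m := by exact_mod_cast (Nat.mod_lt N (by omega)).le
  linarith

lemma Z_pos {β : ℝ} (hβ : 0 < β) {N : ℕ} (hN : 1 ≤ N) : β * N ≤ (2 + β) * N - 2 := by
  have : (1:ℝ) ≤ N := by exact_mod_cast hN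
  linarith

lemma sum_W {N : ℕ} (hN : 1 ≤ N) (β : ℝ) (f : ParentSeq N) :
    ∑ i ∈ Icc 1 N, ((deg f N i : ℝ) + β) = (2 + β) * N - 2 := by
  have h := sum_deg_mul f (fun _ => 1)
  simp only [mul_one] at h
  rw [Finset.sum_add_distrib, h]
  simp only [Finset.sum_const, Nat.card_Icc, nsmul_eq_mul]
  rw [show N + 1 - 2 = N - 1 by omega, Nat.cast_sub hN]
  push_cast
  ring

lemma moriP_nonneg {β : ℝ} (hβ : 0 < β) {N : ℕ} (f : ParentSeq N) : 0 ≤ moriP β f := by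
  unfold moriP
  apply Finset.prod_nonneg
  intro t ht
  rw [Finset.mem_Icc] at ht
  have : (2:ℝ) ≤ t := by exact_mod_cast ht.1
  apply div_nonneg
  · positivity
  · nlinarith

lemma moriE_one {β : ℝ} (hβ : 0 < β) {N : ℕ} (hN : 1 ≤ N) : moriE N β (fun _ => 1) = 1 := by
  induction N, hN using Nat.le_induction with
  | base =>
    unfold moriE moriP
    have : Unique (ParentSeq 1) :=
      { default := fun t => absurd (le_trans t.2.1 t.2.2) (by norm_num)
        uniq := fun f => pval_ext_eq (by intro j hj; rw [Finset.mem_Icc] at hj; omega) }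
    rw [Fintype.sum_unique]
    simp
  | succ N hN ih =>
    rw [moriE_succ hN]
    simp only [mul_one]
    have hZ : (2 + β) * N - 2 ≠ 0 := by
      have := Z_pos hβ hN
      have h1 : (1:ℝ) ≤ N := by exact_mod_cast hN
      nlinarith
    simp_rw [sum_W hN, div_self hZ]
    exact ih

lemma moriE_add {β : ℝ} {N : ℕ} (X Y : ParentSeq N → ℝ) :
    moriE N β (fun f => X f + Y f) = moriE N β X + moriE N β Y := by
  unfold moriE
  rw [← Finset.sum_add_distrib]
  exact Finset.sum_congr rfl (fun _ _ => by ring)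

lemma moriE_smul {β : ℝ} {N : ℕ} (c : ℝ) (X : ParentSeq N → ℝ) :
    moriE N β (fun f => c * X f) = c * moriE N β X := by
  unfold moriE
  rw [Finset.mul_sum]
  exact Finset.sum_congr rfl (fun _ _ => by ring)

lemma moriE_const {β : ℝ} (hβ : 0 < β) {N : ℕ} (hN : 1 ≤ N) (c : ℝ) :
    moriE N β (fun _ => c) = c := by
  have := moriE_smul (β := β) (N := N) c (fun _ => 1)
  rw [moriE_one hβ hN] at this
  simpa using this

lemma moriE_mono {β : ℝ} (hβ : 0 < β) {N : ℕ} {X Y : ParentSeq N → ℝ} (h : ∀ f, X f ≤ Y f) :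
    moriE N β X ≤ moriE N β Y := by
  unfold moriE
  exact Finset.sum_le_sum (fun f _ => mul_le_mul_of_nonneg_left (h f) (moriP_nonneg hβ f))

lemma sum_blk (m : ℕ) (hm : 1 ≤ m) (N : ℕ) :
    ∑ t ∈ Icc 1 N, (if blk m t = blk m (N + 1) then (1:ℝ) else 0) = ((N % m : ℕ) : ℝ) := by
  rw [← card_blk m hm N, Finset.card_filter]; push_cast; rfl

lemma sum_blk_full (m : ℕ) (hm : 1 ≤ m) (N k : ℕ) (hk : 1 ≤ k) (hk' : k < blk m (N + 1)) :
    ∑ t ∈ Icc 1 N, (if blk m t = k then (1:ℝ) else 0) = m := by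
  have : (Icc 1 N).filter (fun t => blk m t = k) = Ioc ((k - 1) * m) (k * m) := by
    unfold blk at hk'
    have h1 : k ≤ N / m := by simp at hk'; omega
    rw [Nat.le_div_iff_mul_le (by omega)] at h1
    ext t
    simp only [Finset.mem_filter, Finset.mem_Icc, Finset.mem_Ioc]
    simp only [blk]
    obtain ⟨k, rfl⟩ : ∃ l, k = l + 1 := ⟨k - 1, by omega⟩
    simp only [Nat.add_sub_cancel, Nat.add_right_cancel_iff]
    rw [Nat.div_eq_iff (by omega)]
    rw [add_mul] at h1 ⊢
    clear hk'
    generalize k * m = q at *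
    omega
  rw [← Finset.sum_filter, this]
  simp only [Finset.sum_const, Nat.card_Ioc, nsmul_eq_mul, mul_one]
  congr 1
  obtain ⟨k, rfl⟩ : ∃ l, k = l + 1 := ⟨k - 1, by omega⟩
  rw [add_mul]
  simp

def SU (m : ℕ) {N : ℕ} (f : ParentSeq N) : ℝ := ∑ k ∈ Icc 1 N, DU m f k ^ 2
def TU (m : ℕ) {N : ℕ} (f : ParentSeq N) : ℝ := ∑ i ∈ Icc 1 N, DU m f (blk m i)
def BU (m : ℕ) {N : ℕ} (f : ParentSeq N) : ℝ := DU m f (blk m (N + 1))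

lemma sum_DU (m : ℕ) {N : ℕ} (hN : 1 ≤ N) (f : ParentSeq N) :
    ∑ k ∈ Icc 1 N, DU m f k = 2 * ((N:ℝ) - 1) := by
  have h := sum_DU_mul m f (fun _ => 1)
  simp only [mul_one] at h
  rw [h]
  simp only [Finset.sum_const, Nat.card_Icc, nsmul_eq_mul]
  rw [show N + 1 - 2 = N - 1 by omega, Nat.cast_sub hN]
  push_cast
  ring

lemma TU_bound (m : ℕ) (hm : 1 ≤ m) {N : ℕ} (hN : 1 ≤ N) (f : ParentSeq N) :
    2 * m * ((N:ℝ) - 1) - 2 * m ^ 2 ≤ TU m f ∧ TU m f ≤ 2 * m * ((N:ℝ) - 1) := by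
  have h1 : TU m f = ∑ k ∈ Icc 1 N, DU m f k * ∑ t ∈ Icc 1 N, (if blk m t = k then (1:ℝ) else 0) := by
    unfold TU
    simp_rw [Finset.mul_sum]
    rw [Finset.sum_comm]
    apply Finset.sum_congr rfl
    intro i hi
    simp only [mul_ite, mul_one, mul_zero]
    rw [Finset.sum_ite_eq, if_pos]
    rw [Finset.mem_Icc] at hi ⊢
    have := blk_le m i hi.1
    exact ⟨blk_pos _ _, by omega⟩
  have h2 : 2 * m * ((N:ℝ) - 1) = ∑ k ∈ Icc 1 N, DU m f k * m := by
    rw [← Finset.sum_mul, sum_DU m hN]; ring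
  have hsm : ((N % m : ℕ) : ℝ) ≤ m := by exact_mod_cast (Nat.mod_lt N (by omega)).le
  have hs0 : (0:ℝ) ≤ ((N % m : ℕ) : ℝ) := by positivity
  have hb := DU_last_le m hm f
  have hb0 := DU_nonneg m f (blk m (N + 1))
  have hle := blk_mono m (show N ≤ N + 1 by omega)
  constructor
  · have h3 : ∑ k ∈ Icc 1 N, DU m f k * m -
        ∑ k ∈ Icc 1 N, DU m f k * ∑ t ∈ Icc 1 N, (if blk m t = k then (1:ℝ) else 0)
        ≤ ∑ k ∈ Icc 1 N, if blk m (N + 1) = k then (2 * (m:ℝ) ^ 2) else 0 := by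
      rw [← Finset.sum_sub_distrib]
      apply Finset.sum_le_sum
      intro k hk
      rw [Finset.mem_Icc] at hk
      rcases lt_trichotomy k (blk m (N + 1)) with h | h | h
      · rw [sum_blk_full m hm N k hk.1 h, if_neg (by omega)]; simp
      · rw [if_pos h.symm, h, sum_blk m hm]
        nlinarith
      · rw [DU_zero m f (by omega), if_neg (by omega)]; simp
    have h4 : (∑ k ∈ Icc 1 N, if blk m (N + 1) = k then (2 * (m:ℝ) ^ 2) else 0) ≤ 2 * (m:ℝ) ^ 2 := by
      rw [Finset.sum_ite_eq]
      split_ifs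
      · exact le_rfl
      · positivity
    rw [h1, h2]
    linarith
  · rw [h1, h2]
    apply Finset.sum_le_sum
    intro k hk
    rw [Finset.mem_Icc] at hk
    rcases lt_trichotomy k (blk m (N + 1)) with h | h | h
    · rw [sum_blk_full m hm N k hk.1 h]
    · rw [h, sum_blk m hm]
      exact mul_le_mul_of_nonneg_left hsm hb0
    · rw [DU_zero m f (by omega)]; simp

lemma SU_pext (m : ℕ) (hm : 1 ≤ m) {N : ℕ} (hN : 1 ≤ N) (f : ParentSeq N) {i : ℕ}
    (hi : i ∈ Icc 1 N) :
    SU m (pext f i) = SU m f + 2 * DU m f (blk m i) + 2 * BU m f + 2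
      + 2 * (if blk m i = blk m (N + 1) then 1 else 0) := by
  have h0 : SU m f = ∑ k ∈ Icc 1 (N + 1), DU m f k ^ 2 := by
    unfold SU
    rw [Finset.sum_Icc_succ_top (by omega), DU_zero m f (k := N + 1)]
    · simp
    · have := blk_le m N hN
      omega
  have h1 : ∀ k, DU m (pext f i) k ^ 2 = DU m f k ^ 2
      + (if blk m (N + 1) = k then 2 * DU m f k + 1 else 0)
      + (if blk m i = k then 2 * DU m f k + 1 else 0)
      + (if blk m i = k then (if blk m (N + 1) = k then 2 else 0) else 0) := by
    intro k
    rw [DU_pext m hN f hi]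
    split_ifs <;> ring
  rw [h0]
  unfold SU BU
  simp_rw [h1]
  rw [Finset.mem_Icc] at hi
  have e1 := blk_le m (N + 1) (by omega)
  have e2 := blk_le m i hi.1
  simp only [Finset.sum_add_distrib, Finset.sum_ite_eq]
  rw [if_pos (Finset.mem_Icc.mpr ⟨blk_pos _ _, e1⟩),
    if_pos (Finset.mem_Icc.mpr ⟨blk_pos _ _, by omega⟩),
    if_pos (Finset.mem_Icc.mpr ⟨blk_pos _ _, by omega⟩)]
  by_cases h : blk m i = blk m (N + 1)
  · rw [if_pos h, if_pos h.symm]; ring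
  · rw [if_neg h, if_neg (Ne.symm h)]; ring

lemma sum_W_blk (m : ℕ) (hm : 1 ≤ m) (β : ℝ) {N : ℕ} (f : ParentSeq N) :
    ∑ i ∈ Icc 1 N, ((deg f N i : ℝ) + β) * (if blk m i = blk m (N + 1) then 1 else 0)
      = BU m f + β * (N % m : ℕ) := by
  simp_rw [add_mul]
  rw [Finset.sum_add_distrib, sum_deg_mul f (fun i => if blk m i = blk m (N + 1) then 1 else 0),
    ← Finset.mul_sum, sum_blk m hm]
  rfl

lemma sum_W_DU (m : ℕ) (β : ℝ) {N : ℕ} (f : ParentSeq N) :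
    ∑ i ∈ Icc 1 N, ((deg f N i : ℝ) + β) * DU m f (blk m i) = SU m f + β * TU m f := by
  simp_rw [add_mul]
  rw [Finset.sum_add_distrib, sum_deg_mul f (fun i => DU m f (blk m i)), ← Finset.mul_sum,
    ← sum_DU_mul m f (fun k => DU m f k)]
  unfold SU TU
  simp_rw [pow_two]

lemma ES_succ (m : ℕ) (hm : 1 ≤ m) {β : ℝ} (hβ : 0 < β) {N : ℕ} (hN : 1 ≤ N) :
    ((2 + β) * N - 2) * moriE (N + 1) β (SU m) =
      ((2 + β) * N - 2 + 2) * moriE N β (SU m) + 2 * β * moriE N β (TU m)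
      + 2 * (moriE N β (BU m) + β * (N % m : ℕ))
      + ((2 + β) * N - 2) * (2 * moriE N β (BU m) + 2) := by
  have hZ : (2 + β) * N - 2 ≠ 0 := by
    have := Z_pos hβ hN
    have h1 : (1:ℝ) ≤ N := by exact_mod_cast hN
    nlinarith
  rw [moriE_succ hN]
  have key : ∀ f : ParentSeq N, ∑ i ∈ Icc 1 N, ((deg f N i : ℝ) + β) * SU m (pext f i) =
      (((2 + β) * N - 2 + 2) * SU m f + 2 * β * TU m f) +
      ((2 + 2 * ((2 + β) * N - 2)) * BU m f + (2 * β * (N % m : ℕ) + 2 * ((2 + β) * N - 2))) := by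
    intro f
    have : ∀ i ∈ Icc 1 N, ((deg f N i : ℝ) + β) * SU m (pext f i) =
        ((deg f N i : ℝ) + β) * (SU m f + 2 * BU m f + 2)
        + 2 * (((deg f N i : ℝ) + β) * DU m f (blk m i))
        + 2 * (((deg f N i : ℝ) + β) * (if blk m i = blk m (N + 1) then 1 else 0)) := by
      intro i hi
      rw [SU_pext m hm hN f hi]
      ring
    rw [Finset.sum_congr rfl this, Finset.sum_add_distrib, Finset.sum_add_distrib,
      ← Finset.sum_mul, ← Finset.mul_sum, ← Finset.mul_sum, sum_W hN, sum_W_DU, sum_W_blk m hm]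
    ring
  simp_rw [key, div_eq_inv_mul]
  rw [moriE_smul, mul_inv_cancel_left₀ hZ, moriE_add, moriE_add, moriE_add, moriE_smul, moriE_smul,
    moriE_smul, moriE_const hβ hN]
  ring

lemma EB_zero (m : ℕ) (hm : 1 ≤ m) {β : ℝ} {N : ℕ} (h : m ∣ N) (hN : 1 ≤ N) :
    moriE N β (BU m) = 0 := by
  unfold moriE
  apply Finset.sum_eq_zero
  intro f _
  unfold BU
  rw [DU_zero m f, mul_zero]
  unfold blk
  obtain ⟨q, rfl⟩ := h
  rw [Nat.add_sub_cancel, Nat.mul_div_cancel_left _ (by omega)]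
  have : (m * q - 1) / m < q := by
    rw [Nat.div_lt_iff_lt_mul (by omega), mul_comm q m]; omega
  omega

lemma EB_succ (m : ℕ) (hm : 1 ≤ m) {β : ℝ} (hβ : 0 < β) {N : ℕ} (hN : 1 ≤ N) (h : ¬ m ∣ N + 1) :
    moriE (N + 1) β (BU m) = moriE N β (BU m) + 1
      + (moriE N β (BU m) + β * (N % m : ℕ)) / ((2 + β) * N - 2) := by
  have hZ : (2 + β) * N - 2 ≠ 0 := by
    have := Z_pos hβ hN
    have h1 : (1:ℝ) ≤ N := by exact_mod_cast hN
    nlinarith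
  have hb : blk m (N + 1 + 1) = blk m (N + 1) := by
    unfold blk
    simp only [Nat.add_sub_cancel]
    rw [Nat.succ_div_of_not_dvd h]
  rw [moriE_succ hN]
  have key : ∀ f : ParentSeq N, (∑ i ∈ Icc 1 N, ((deg f N i : ℝ) + β) * BU m (pext f i)) /
      ((2 + β) * N - 2) =
      (1 + ((2 + β) * N - 2)⁻¹) * BU m f + (1 + β * (N % m : ℕ) / ((2 + β) * N - 2)) := by
    intro f
    have : ∀ i ∈ Icc 1 N, ((deg f N i : ℝ) + β) * BU m (pext f i) =
        ((deg f N i : ℝ) + β) * (BU m f + 1)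
        + (((deg f N i : ℝ) + β) * (if blk m i = blk m (N + 1) then 1 else 0)) := by
      intro i hi
      unfold BU
      rw [hb, DU_pext m hN f hi, if_pos rfl]
      ring
    rw [Finset.sum_congr rfl this, Finset.sum_add_distrib,
      ← Finset.sum_mul, sum_W hN, sum_W_blk m hm]
    field_simp
    ring
  simp_rw [key]
  rw [moriE_add, moriE_smul, moriE_const hβ hN]
  field_simp
  ring

lemma EB_bounds (m : ℕ) (hm : 1 ≤ m) {β : ℝ} (hβ : 0 < β) {N : ℕ} (hN : 1 ≤ N) :
    0 ≤ moriE N β (BU m) ∧ moriE N β (BU m) ≤ 2 * m := by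
  constructor
  · rw [← moriE_const hβ hN 0]
    exact moriE_mono hβ (fun f => DU_nonneg m f _)
  · rw [← moriE_const hβ hN (2 * m)]
    exact moriE_mono hβ (fun f => DU_last_le m hm f)

lemma ET_bounds (m : ℕ) (hm : 1 ≤ m) {β : ℝ} (hβ : 0 < β) {N : ℕ} (hN : 1 ≤ N) :
    2 * m * ((N:ℝ) - 1) - 2 * m ^ 2 ≤ moriE N β (TU m) ∧
      moriE N β (TU m) ≤ 2 * m * ((N:ℝ) - 1) := by
  constructor
  · rw [← moriE_const hβ hN (2 * m * ((N:ℝ) - 1) - 2 * m ^ 2)]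
    exact moriE_mono hβ (fun f => (TU_bound m hm hN f).1)
  · rw [← moriE_const hβ hN (2 * m * ((N:ℝ) - 1))]
    exact moriE_mono hβ (fun f => (TU_bound m hm hN f).2)

lemma mod_cases (m : ℕ) (hm : 1 ≤ m) (N : ℕ) :
    (m ∣ N + 1 ∧ (N + 1) % m = 0 ∧ N % m + 1 = m) ∨ (¬ m ∣ N + 1 ∧ (N + 1) % m = N % m + 1) := by
  have h1 := Nat.add_mod N 1 m
  have h2 := Nat.mod_lt N (show 0 < m by omega)
  by_cases h : m ∣ N + 1
  · left
    refine ⟨h, Nat.mod_eq_zero_of_dvd h, ?_⟩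
    have h3 := Nat.div_add_mod N m
    obtain ⟨q, hq⟩ := h
    have h4 : m ∣ N % m + 1 := by
      have : m ∣ m * (N / m) + (N % m + 1) := ⟨q, by omega⟩
      exact (Nat.dvd_add_right (Dvd.intro _ rfl)).mp this
    have := Nat.le_of_dvd (by omega) h4
    omega
  · right
    refine ⟨h, ?_⟩
    have h3 := Nat.div_add_mod N m
    have h4 : N % m + 1 ≠ m := by
      intro h5
      apply h
      exact ⟨N / m + 1, by rw [mul_add]; omega⟩
    rw [← Nat.mod_add_mod, Nat.mod_eq_of_lt (by omega)]

lemma EB_close (m : ℕ) (hm : 1 ≤ m) {β : ℝ} (hβ : 0 < β) :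
    ∃ C : ℝ, 0 < C ∧ ∀ N : ℕ, 1 ≤ N → |moriE N β (BU m) - (N % m : ℕ)| ≤ C / N := by
  obtain ⟨C0, hC0⟩ : ∃ C0 : ℝ, C0 = (2 + β) * m / β := ⟨_, rfl⟩
  have hC0p : 0 ≤ C0 := by rw [hC0]; positivity
  have key : ∀ N : ℕ, 1 ≤ N →
      |moriE N β (BU m) - (N % m : ℕ)| ≤ 4 ^ (N % m) * (C0 + 1) / N := by
    intro N hN
    induction N, hN using Nat.le_induction with
    | base =>
      have h0 : moriE 1 β (BU m) = 0 := by
        unfold moriE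
        apply Finset.sum_eq_zero
        intro f _
        simp [BU, DU]
      rw [h0]
      have h1 : 1 % m ≤ 1 := Nat.mod_le 1 m
      have h2 : (1:ℝ) ≤ 4 ^ (1 % m) := one_le_pow₀ (by norm_num)
      have h3 : ((1 % m : ℕ) : ℝ) ≤ 1 := by exact_mod_cast h1
      rw [zero_sub, abs_neg, abs_of_nonneg (by positivity)]
      simp only [Nat.cast_one, div_one]
      nlinarith
    | succ N hN ih =>
      rcases mod_cases m hm N with ⟨h1, h2, _⟩ | ⟨h1, h2⟩
      · rw [EB_zero m hm h1 (by omega), h2]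
        simp
        positivity
      · rw [EB_succ m hm hβ hN h1, h2]
        have hN1 : (1:ℝ) ≤ N := by exact_mod_cast hN
        have hZ := Z_pos hβ hN
        obtain ⟨b1, b2⟩ := EB_bounds m hm hβ hN
        have hsm : ((N % m : ℕ) : ℝ) ≤ m := by exact_mod_cast (Nat.mod_lt N (by omega)).le
        have hZ0 : 0 < β * N := by positivity
        set E := moriE N β (BU m)
        set s : ℝ := ((N % m : ℕ) : ℝ) with hs
        have hs0 : 0 ≤ s := by positivity
        have q0 : 0 ≤ (E + β * s) / ((2 + β) * N - 2) :=
          div_nonneg (by positivity) (by linarith)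
        have q1 : (E + β * s) / ((2 + β) * N - 2) ≤ C0 / N := by
          rw [hC0, div_div]
          apply div_le_div₀ (by positivity) _ hZ0 hZ
          nlinarith
        push_cast
        rw [← hs]
        have e : E + 1 + (E + β * s) / ((2 + β) * N - 2) - (s + 1)
          = (E - s) + (E + β * s) / ((2 + β) * N - 2) := by ring
        rw [e]
        refine (abs_add_le _ _).trans ?_
        rw [abs_of_nonneg q0]
        have h4 : (1:ℝ) ≤ 4 ^ (N % m) := one_le_pow₀ (by norm_num)
        calc _ ≤ 4 ^ (N % m) * (C0 + 1) / N + C0 / N := add_le_add ih q1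
          _ = (4 ^ (N % m) * (C0 + 1) + C0) / N := by ring
          _ ≤ 4 ^ (N % m + 1) * (C0 + 1) / (N + 1) := by
            rw [div_le_div_iff₀ (by positivity) (by positivity), pow_succ]
            have h5 : 4 ^ (N % m) * (C0 + 1) + C0 ≤ 2 * (4 ^ (N % m) * (C0 + 1)) := by nlinarith
            have h6 : 0 ≤ 4 ^ (N % m) * (C0 + 1) := by positivity
            calc _ ≤ 2 * (4 ^ (N % m) * (C0 + 1)) * (2 * N) :=
                  mul_le_mul h5 (by linarith) (by positivity) (by positivity)
              _ = _ := by ring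
  refine ⟨4 ^ m * (C0 + 1), by positivity, fun N hN => (key N hN).trans ?_⟩
  have : (4:ℝ) ^ (N % m) ≤ 4 ^ m := pow_le_pow_right₀ (by norm_num) (Nat.mod_lt N (by omega)).le
  gcongr

lemma growth {β : ℝ} (hβ : 0 < β) (x : ℕ → ℝ) (hx : ∀ N, 0 ≤ x N)
    (h : ∀ N : ℕ, 1 ≤ N → x (N + 1) ≤ (1 + 2 / ((2 + β) * N - 2)) * x N) :
    ∃ K : ℝ, 0 < K ∧ ∀ N : ℕ, 1 ≤ N → x N ≤ K * (N : ℝ) ^ (2 / (2 + β)) := by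
  set α := 2 / (2 + β) with hα
  have hα0 : 0 < α := by positivity
  have hα1 : α < 1 := by rw [hα, div_lt_one (by positivity)]; linarith
  have key : ∀ N : ℕ, 1 ≤ N → x (N + 1) ≤ x 2 * (N : ℝ) ^ α := by
    intro N hN
    induction N, hN using Nat.le_induction with
    | base => simp
    | succ N hN ih =>
      have hN1 : (1:ℝ) ≤ N := by exact_mod_cast hN
      have hr : 1 + 2 / ((2 + β) * (N + 1 : ℕ) - 2) ≤ ((N + 1 : ℕ) / (N : ℝ)) ^ α := by
        push_cast
        have b := rpow_one_add_le_one_add_mul_self (s := -(1 / ((N:ℝ) + 1))) (p := α)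
          (by rw [neg_le_neg_iff, div_le_one (by positivity)]; linarith) hα0.le hα1.le
        have e1 : 1 + -(1 / ((N:ℝ) + 1)) = (((N:ℝ) + 1) / N)⁻¹ := by field_simp; ring
        rw [e1, Real.inv_rpow (by positivity)] at b
        have p0 : 0 < (((N:ℝ) + 1) / N) ^ α := by positivity
        have e2 : 1 + 2 / ((2 + β) * ((N:ℝ) + 1) - 2) = (1 + α * -(1 / ((N:ℝ) + 1)))⁻¹ := by
          have : (2 + β) * ((N:ℝ) + 1) - 2 ≠ 0 := by nlinarith
          have h3 : 1 + α * -(1 / ((N:ℝ) + 1)) = ((2 + β) * ((N:ℝ) + 1) - 2) / ((2 + β) * ((N:ℝ) + 1)) := by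
            rw [hα]; field_simp; ring
          rw [h3, inv_div]
          field_simp
          ring
        rw [e2]
        exact inv_le_of_inv_le₀ p0 b
      calc x (N + 1 + 1) ≤ _ := h (N + 1) (by omega)
        _ ≤ ((N + 1 : ℕ) / (N : ℝ)) ^ α * (x 2 * (N : ℝ) ^ α) :=
          mul_le_mul hr ih (hx _) (by positivity)
        _ = x 2 * ((N + 1 : ℕ) : ℝ) ^ α := by
          rw [Real.div_rpow (by positivity) (by positivity)]
          field_simp
  refine ⟨x 1 + x 2 + 1, by linarith [hx 1, hx 2], fun N hN => ?_⟩
  rcases Nat.lt_or_ge N 2 with h2 | h2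
  · have : N = 1 := by omega
    subst this
    simp
    linarith [hx 2]
  · obtain ⟨M, rfl⟩ : ∃ M, N = M + 1 := ⟨N - 1, by omega⟩
    refine (key M (by omega)).trans ?_
    apply mul_le_mul
    · linarith [hx 1]
    · apply Real.rpow_le_rpow (by positivity) (by push_cast; linarith) hα0.le
    · positivity
    · linarith [hx 1, hx 2]

set_option maxHeartbeats 1000000 in
lemma ES_asymp (m : ℕ) (hm : 1 ≤ m) {β : ℝ} (hβ : 0 < β) :
    ∃ K : ℝ, 0 < K ∧ ∀ N : ℕ, 1 ≤ N →
      |moriE N β (SU m) - ((5 * β + 2) * m + 2 + β) / β * N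
        - ((N % m : ℕ) : ℝ) * ((N % m : ℕ) - m)| ≤ K * (N : ℝ) ^ (2 / (2 + β)) := by
  obtain ⟨C, hC, hB⟩ := EB_close m hm hβ
  obtain ⟨c, hc⟩ : ∃ c : ℝ, c = ((5 * β + 2) * m + 2 + β) / β := ⟨_, rfl⟩
  rw [← hc]
  have hcβ : c * β = (5 * β + 2) * m + 2 + β := by rw [hc]; field_simp
  have hc0 : 0 ≤ c := by rw [hc]; positivity
  set e : ℕ → ℝ := fun N => moriE N β (SU m) - c * N - ((N % m : ℕ) : ℝ) * ((N % m : ℕ) - m) with he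
  have hm0 : (1:ℝ) ≤ m := by exact_mod_cast hm
  obtain ⟨Q, hQ⟩ : ∃ Q : ℝ, Q = 2 * (2 + β) * C + 4 * β * m ^ 2 + 2 * (2 + β) * m + 2 * m ^ 2
    + 4 * β * m + 2 * (1 + m + c) := ⟨_, rfl⟩
  have hQ0 : 0 ≤ Q := by rw [hQ]; positivity
  have hstep : ∀ N : ℕ, 1 ≤ N →
      |e (N + 1)| + Q / 2 ≤ (1 + 2 / ((2 + β) * N - 2)) * (|e N| + Q / 2) := by
    intro N hN
    have hN1 : (1:ℝ) ≤ N := by exact_mod_cast hN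
    have hS := ES_succ m hm hβ hN
    have hZ := Z_pos hβ hN
    have hZ0 : 0 < (2 + β) * N - 2 := lt_of_lt_of_le (by positivity) hZ
    obtain ⟨b1, b2⟩ := EB_bounds m hm hβ hN
    obtain ⟨t1, t2⟩ := ET_bounds m hm hβ hN
    have hb := hB N hN
    have hsm : ((N % m : ℕ) : ℝ) ≤ m := by exact_mod_cast (Nat.mod_lt N (by omega)).le
    have hs0 : (0:ℝ) ≤ ((N % m : ℕ) : ℝ) := by positivity
    have hp : (((N + 1) % m : ℕ) : ℝ) * (((N + 1) % m : ℕ) - m) =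
        ((N % m : ℕ) : ℝ) * ((N % m : ℕ) - m) + 2 * (N % m : ℕ) + 1 - m := by
      rcases mod_cases m hm N with ⟨_, h2, h3⟩ | ⟨_, h2⟩
      · rw [h2]
        have : ((N % m : ℕ) : ℝ) = m - 1 := by
          have : ((N % m : ℕ) : ℝ) + 1 = m := by exact_mod_cast h3
          linarith
        rw [this]; push_cast; ring
      · rw [h2]; push_cast; ring
    have heN : e N = moriE N β (SU m) - c * N - ((N % m : ℕ) : ℝ) * ((N % m : ℕ) - m) := rfl
    have heN1 : e (N + 1) = moriE (N + 1) β (SU m) - c * (N + 1)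
        - (((N % m : ℕ) : ℝ) * ((N % m : ℕ) - m) + 2 * (N % m : ℕ) + 1 - m) := by
      rw [← hp, he]; push_cast; rfl
    generalize ((N % m : ℕ) : ℝ) = s at *
    generalize moriE N β (BU m) = B at *
    generalize moriE N β (TU m) = T at *
    generalize moriE N β (SU m) = S at *
    generalize moriE (N + 1) β (SU m) = S' at *
    generalize hZdef : (2 + β) * (N:ℝ) - 2 = Z at *
    obtain ⟨R, hR⟩ : ∃ R : ℝ, R = 2 * (Z * (B - s)) + 2 * β * (T - 2 * m * ((N:ℝ) - 1))
      + 2 * (B + β * s) + 2 * (s * (s - m)) - 4 * β * m - 2 * (1 + m - c) := ⟨_, rfl⟩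
    have hrec : Z * e (N + 1) = (Z + 2) * e N + R := by
      rw [heN, heN1, hR, ← sub_eq_zero]
      have : Z * S' = (Z + 2) * S + 2 * β * T + 2 * (B + β * s) + Z * (2 * B + 2) := hS
      have h2 : Z = (2 + β) * N - 2 := hZdef.symm
      linear_combination this + (1 + m - c) * h2 - (N:ℝ) * hcβ
    have hzb : |Z * (B - s)| ≤ (2 + β) * C := by
      rw [abs_mul, abs_of_pos hZ0]
      calc Z * |B - s| ≤ ((2 + β) * N) * (C / N) :=
            mul_le_mul (by linarith) hb (abs_nonneg _) (by positivity)
        _ = (2 + β) * C := by field_simp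
    have hRQ : |R| ≤ Q := by
      obtain ⟨z1, z2⟩ := abs_le.mp hzb
      have u1 : 0 ≤ β * s := by positivity
      have u2 : β * s ≤ β * m := by gcongr
      have u3 : s * (s - m) ≤ 0 := mul_nonpos_of_nonneg_of_nonpos hs0 (by linarith)
      have u4 : -(m:ℝ) ^ 2 ≤ s * (s - m) := by
        have := mul_le_mul_of_nonneg_right hsm (show (0:ℝ) ≤ m by positivity)
        linarith [mul_self_nonneg s]
      have u5 : β * (T - 2 * m * ((N:ℝ) - 1)) ≤ 0 := mul_nonpos_of_nonneg_of_nonpos hβ.le (by linarith)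
      have u6 : -(2 * β * m ^ 2) ≤ β * (T - 2 * m * ((N:ℝ) - 1)) := by
        have := mul_le_mul_of_nonneg_left (show -(2 * (m:ℝ) ^ 2) ≤ T - 2 * m * ((N:ℝ) - 1) by linarith) hβ.le
        linarith
      have u7 : 0 ≤ β * m := by positivity
      have u8 : 0 ≤ β * (m:ℝ) ^ 2 := by positivity
      have u9 : 0 ≤ (m:ℝ) ^ 2 := by positivity
      rw [abs_le, hR, hQ]
      constructor <;> linarith
    have h1 : Z * |e (N + 1)| ≤ (Z + 2) * |e N| + Q := by
      calc Z * |e (N + 1)| = |Z * e (N + 1)| := by rw [abs_mul, abs_of_pos hZ0]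
        _ = |(Z + 2) * e N + R| := by rw [hrec]
        _ ≤ |(Z + 2) * e N| + |R| := abs_add_le _ _
        _ ≤ _ := by rw [abs_mul, abs_of_pos (by linarith : 0 < Z + 2)]; linarith
    have h2 : (1 + 2 / Z) * (|e N| + Q / 2) = ((Z + 2) * (|e N| + Q / 2)) / Z := by
      field_simp
    rw [h2, le_div_iff₀ hZ0]
    linarith
  obtain ⟨K, hK, h⟩ := growth hβ (fun N => |e N| + Q / 2) (fun N => by positivity) hstep
  refine ⟨K, hK, fun N hN => ?_⟩
  have := h N hN
  have h3 : |e N| ≤ K * (N : ℝ) ^ (2 / (2 + β)) := by linarith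
  exact h3

/-- **Proposition 4.2.** The expectation of `Σ_{i} binom(d(u_i),2)` in `G^n_{m,β}` is
`((2+5β)/(2β)·m² + (2−β)/(2β)·m)·n + O(n^{2/(2+β)})`. -/
theorem expected_sum_binom_degrees (β : ℝ) (hβ : 0 < β) (m : ℕ) (hm : 1 ≤ m) :
    ∃ K : ℝ, 0 < K ∧ ∀ n : ℕ, 1 ≤ n →
      |moriE (n * m) β (fun f => ∑ i ∈ Finset.Icc 1 n, (Nat.choose (degU n m f i) 2 : ℝ))
        - ((2 + 5 * β) / (2 * β) * (m : ℝ) ^ 2 + (2 - β) / (2 * β) * (m : ℝ)) * (n : ℝ)|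
        ≤ K * (n : ℝ) ^ (2 / (2 + β)) := by
  obtain ⟨K, hK, h⟩ := ES_asymp m hm hβ
  refine ⟨K * (m:ℝ) ^ (2 / (2 + β)) + 1, by positivity, fun n hn => ?_⟩
  have hNn : n ≤ n * m := Nat.le_mul_of_pos_right n (by omega)
  have hN : 1 ≤ n * m := by omega
  have h1 := h (n * m) hN
  rw [Nat.mul_mod_left] at h1
  have hbl : blk m (n * m) = n := by
    unfold blk
    have : (n * m - 1) / m = n - 1 := by
      rw [Nat.div_eq_iff (by omega), Nat.sub_mul]
      omega
    omega
  have hX : ∀ f : ParentSeq (n * m),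
      ∑ i ∈ Finset.Icc 1 n, (Nat.choose (degU n m f i) 2 : ℝ) =
        (1 / 2) * SU m f + (-(((n * m : ℕ) : ℝ) - 1)) := by
    intro f
    have e1 : ∑ i ∈ Finset.Icc 1 n, (Nat.choose (degU n m f i) 2 : ℝ) =
        ∑ i ∈ Finset.Icc 1 (n * m), ((1 / 2) * DU m f i ^ 2 - (1 / 2) * DU m f i) := by
      rw [← Finset.sum_subset (Finset.Icc_subset_Icc_right hNn)]
      · apply Finset.sum_congr rfl
        intro i _
        rw [Nat.cast_choose_two, degU_eq]
        ring
      · intro k hk hk'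
        rw [Finset.mem_Icc] at hk hk'
        rw [DU_zero m f (by omega)]
        norm_num
    rw [e1, Finset.sum_sub_distrib, ← Finset.mul_sum, ← Finset.mul_sum, sum_DU m hN]
    unfold SU
    ring
  have hE : moriE (n * m) β (fun f => ∑ i ∈ Finset.Icc 1 n, (Nat.choose (degU n m f i) 2 : ℝ))
      = (1 / 2) * moriE (n * m) β (SU m) + (-(((n * m : ℕ) : ℝ) - 1)) := by
    simp_rw [hX]
    rw [moriE_add, moriE_smul, moriE_const hβ hN]
  rw [hE]
  have hn1 : (1:ℝ) ≤ (n : ℝ) ^ (2 / (2 + β)) :=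
    Real.one_le_rpow (by exact_mod_cast hn) (by positivity)
  push_cast at h1 ⊢
  rw [Real.mul_rpow (by positivity) (by positivity)] at h1
  have e2 : 1 / 2 * moriE (n * m) β (SU m) + -((n:ℝ) * m - 1)
      - ((2 + 5 * β) / (2 * β) * (m : ℝ) ^ 2 + (2 - β) / (2 * β) * (m : ℝ)) * (n : ℝ)
      = (1 / 2) * (moriE (n * m) β (SU m) - ((5 * β + 2) * m + 2 + β) / β * (n * m)
        - 0 * (0 - m)) + 1 := by
    field_simp
    ring
  rw [e2]
  refine (abs_add_le _ _).trans ?_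
  rw [abs_mul, abs_one, abs_of_pos (by norm_num : (0:ℝ) < 1 / 2)]
  have h2 := abs_nonneg (moriE (n * m) β (SU m) - ((5 * β + 2) * m + 2 + β) / β * (n * m)
        - 0 * (0 - (m:ℝ)))
  nlinarith
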